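/- For an IPPA sequence on a proper, convex, lower semicontinuous function h with errors and step sizes satisfying (A1)–(A5): if h*(s̄) < ∞, then the vertical distance to the asymptotic supporting plane of slope s̄ vanishes, i.e. h(λ⋆^k) + h*(s̄) − ⟨λ⋆^k, s̄⟩ → 0; if moreover s̄ belongs to range ∂h (equivalently, h* is subdifferentiable at s̄), then h(λ⋆^k) + h*(s̄) − ⟨λ⋆^k, s̄⟩ = O(1/√(∑_{i=0}^{k−1} γ_i)). -/

import Mathlib

open scoped RealInnerProductSpace
open Filter Asymptotics

noncomputable section

/-- The Fenchel conjugate of an `EReal`-valued function on a real inner product space. -/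
def fenchel {Y : Type*} [NormedAddCommGroup Y] [InnerProductSpace ℝ Y]
    (h : Y → EReal) (s : Y) : EReal :=
  ⨆ l : Y, ((⟪s, l⟫ : ℝ) : EReal) - h l

/-- The convex subdifferential of an `EReal`-valued function: `v ∈ ∂h(u)` iff
`h w ≥ h u + ⟪v, w − u⟫` for all `w`. -/
def subdiff {Y : Type*} [NormedAddCommGroup Y] [InnerProductSpace ℝ Y]
    (h : Y → EReal) (u : Y) : Set Y :=
  {v : Y | ∀ w : Y, h u + ((⟪v, w - u⟫ : ℝ) : EReal) ≤ h w}


/-! The sets `dom h*` and `range ∂h` have the same closure: a proximal step with step size `γ` from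
`u + γ s` produces a subgradient within `√(2 * gap u / γ)` of `s`, where `gap = h + h* s - ⟪·, s⟫`.
Since `dom h*` is convex, `s̄` is the projection of the origin onto a closed convex set, so
`⟪v - s̄, s̄⟫ ≥ 0` for every subgradient `v`.

Write `G k = ∑ i < k, γ i`. Shifting the iterates by `G k • s̄` turns the algorithm into an inexact
proximal point method for `gap`, up to terms of favourable sign: `‖λ^k + G k • s̄ - u‖ ^ 2` is a
Lyapunov function, and Grönwall's inequality bounds `∑ γ i * gap` along the iterates by
`K + C * gap u * G k`, with `C` independent of `u`. The gap is nonincreasing up to errors of order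
`ε ^ 2 / γ`, so `G k * gap` obeys a bound of the same form. Choosing `u` with `gap u` arbitrarily
small gives the limit; if `s̄ ∈ ∂h u`, then `gap u = 0` and the gap is `O(1 / G k)`. -/

section Convexity

variable {E : Type*} [AddCommGroup E] [Module ℝ E]

/-- Convexity of an extended-real-valued function, as Jensen's inequality for two points; the
convention `0 * ⊤ = 0` of `EReal` makes the inequality trivial when a weight vanishes. -/
def JensenConvex (h : E → EReal) : Prop :=
  ∀ u v : E, ∀ a b : ℝ, 0 ≤ a → 0 ≤ b → a + b = 1 →
    h (a • u + b • v) ≤ (a : EReal) * h u + (b : EReal) * h v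

lemma JensenConvex.map_add_smul_sub_le {h : E → EReal} (hcvx : JensenConvex h) {u v : E}
    {x y t : ℝ} (hu : h u ≤ x) (hv : h v ≤ y) (ht₀ : 0 ≤ t) (ht₁ : t ≤ 1) :
    h (u + t • (v - u)) ≤ (((1 - t) * x + t * y : ℝ) : EReal) := by
  rw [show u + t • (v - u) = (1 - t) • u + t • v by module, EReal.coe_add, EReal.coe_mul,
    EReal.coe_mul]
  refine (hcvx u v (1 - t) t (sub_nonneg.2 ht₁) ht₀ (sub_add_cancel 1 t)).trans ?_
  exact add_le_add
    (mul_le_mul_of_nonneg_left hu (EReal.coe_nonneg.2 (sub_nonneg.2 ht₁)))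
    (mul_le_mul_of_nonneg_left hv (EReal.coe_nonneg.2 ht₀))

end Convexity

section Minimizers

lemma ereal_add_coe_le_coe_iff {a : EReal} {q r : ℝ} :
    a + q ≤ r ↔ a ≤ ((r - q : ℝ) : EReal) := by
  rw [EReal.coe_sub, EReal.le_sub_iff_add_le (by simp) (by simp)]

lemma exists_eq_iInf_of_dist_sq_le {X : Type*} [PseudoMetricSpace X] [CompleteSpace X]
    {f : X → EReal} (hf : LowerSemicontinuous f) {m C : ℝ} (hm : ⨅ x, f x = m)
    (hdist : ∀ (x y : X) (δ : ℝ), f x ≤ ((m + δ : ℝ) : EReal) → f y ≤ ((m + δ : ℝ) : EReal) →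
      dist x y ^ 2 ≤ C * δ) :
    ∃ p, f p = m := by
  let δ : ℕ → ℝ := fun n => 1 / ((n : ℝ) + 1)
  have hδ : Tendsto δ atTop (nhds 0) := tendsto_one_div_add_atTop_nhds_zero_nat
  let S : ℕ → Set X := fun n => {x | f x ≤ ((m + δ n : ℝ) : EReal)}
  have hS_dist (n : ℕ) : ∀ x ∈ S n, ∀ y ∈ S n, dist x y ≤ √(C * δ n) := fun x hx y hy =>
    Real.le_sqrt_of_sq_le (hdist x y _ hx hy)
  have hS_nonempty (N : ℕ) : (⋂ n ≤ N, S n).Nonempty := by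
    have hlt : ⨅ x, f x < ((m + δ N : ℝ) : EReal) := by
      rw [hm, EReal.coe_lt_coe_iff]
      exact lt_add_of_pos_right m Nat.one_div_pos_of_nat
    obtain ⟨x, hx⟩ := iInf_lt_iff.1 hlt
    refine ⟨x, Set.mem_iInter₂.2 fun n hn => hx.le.trans (EReal.coe_le_coe_iff.2 ?_)⟩
    exact add_le_add_right (Nat.one_div_le_one_div hn) m
  have hS_diam : Tendsto (fun n => Metric.diam (S n)) atTop (nhds 0) := by
    refine squeeze_zero (fun n => Metric.diam_nonneg)
      (fun n => Metric.diam_le_of_forall_dist_le (Real.sqrt_nonneg _) (hS_dist n)) ?_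
    simpa using (hδ.const_mul C).sqrt
  obtain ⟨p, hp⟩ := Metric.nonempty_iInter_of_nonempty_biInter
    (fun n => hf.isClosed_preimage ((m + δ n : ℝ) : EReal))
    (fun n => Metric.isBounded_iff.2 ⟨_, hS_dist n⟩) hS_nonempty hS_diam
  have hlim : Tendsto (fun n => ((m + δ n : ℝ) : EReal)) atTop (nhds m) :=
    (continuous_coe_real_ereal.tendsto m).comp (by simpa using hδ.const_add m)
  exact ⟨p, le_antisymm (ge_of_tendsto' hlim (Set.mem_iInter.1 hp)) (hm ▸ iInf_le f p)⟩

end Minimizers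

section HilbertSpace

variable {Y : Type*} [NormedAddCommGroup Y] [InnerProductSpace ℝ Y] {h : Y → EReal}

section Conjugate

variable {s u v w l : Y}

lemma le_fenchel (h : Y → EReal) (s l : Y) : ((⟪s, l⟫ : ℝ) : EReal) - h l ≤ fenchel h s :=
  le_iSup (fun l => ((⟪s, l⟫ : ℝ) : EReal) - h l) l

lemma fenchel_le_coe_iff {C : ℝ} :
    fenchel h s ≤ C ↔ ∀ l, ((⟪s, l⟫ - C : ℝ) : EReal) ≤ h l := by
  refine iSup_le_iff.trans (forall_congr' fun l => ?_)
  rw [EReal.sub_le_iff_le_add (by simp) (by simp), EReal.coe_sub,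
    EReal.sub_le_iff_le_add (by simp) (by simp), add_comm]

lemma exists_fenchel_le_coe (hs : fenchel h s ≠ ⊤) : ∃ C : ℝ, fenchel h s ≤ C :=
  ⟨_, EReal.le_coe_toReal hs⟩

lemma ne_bot_of_fenchel_ne_top (hs : fenchel h s ≠ ⊤) (l : Y) : h l ≠ ⊥ := by
  obtain ⟨C, hC⟩ := exists_fenchel_le_coe hs
  exact ne_bot_of_le_ne_bot (EReal.coe_ne_bot _) (fenchel_le_coe_iff.1 hC l)

lemma fenchel_ne_bot (hl : h l ≠ ⊤) : fenchel h s ≠ ⊥ := by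
  refine ne_bot_of_le_ne_bot ?_ (le_fenchel h s l)
  simp [sub_eq_add_neg, EReal.add_eq_bot_iff, hl]

lemma convex_setOf_fenchel_ne_top (h : Y → EReal) : Convex ℝ {s | fenchel h s ≠ ⊤} := by
  intro s hs t ht a b ha hb hab
  obtain ⟨C, hC⟩ := exists_fenchel_le_coe hs
  obtain ⟨D, hD⟩ := exists_fenchel_le_coe ht
  refine ne_top_of_le_ne_top (EReal.coe_ne_top (a * C + b * D))
    (fenchel_le_coe_iff.2 fun l => ?_)
  refine le_trans ?_ (max_le (fenchel_le_coe_iff.1 hC l) (fenchel_le_coe_iff.1 hD l))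
  rw [← EReal.coe_strictMono.monotone.map_max, EReal.coe_le_coe_iff]
  refine le_trans (le_of_eq ?_) (Convex.combo_le_max _ _ ha hb hab)
  rw [inner_add_left, real_inner_smul_left, real_inner_smul_left, smul_eq_mul, smul_eq_mul]
  ring

lemma ne_top_of_mem_subdiff (hv : v ∈ subdiff h u) (hw : h w ≠ ⊤) : h u ≠ ⊤ := by
  intro hu
  have hle := hv w
  rw [hu, EReal.top_add_coe] at hle
  exact hw (top_le_iff.1 hle)

lemma fenchel_le_of_mem_subdiff (hbot : h u ≠ ⊥) (htop : h u ≠ ⊤) (hv : v ∈ subdiff h u) :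
    fenchel h v ≤ ((⟪v, u⟫ - (h u).toReal : ℝ) : EReal) := by
  refine fenchel_le_coe_iff.2 fun l => le_trans (le_of_eq ?_) (hv l)
  rw [← EReal.coe_toReal htop hbot, ← EReal.coe_add, EReal.toReal_coe, inner_sub_right]
  congr 1
  ring

/-- The vertical distance at `l` between `h` and its asymptotic supporting plane of slope `s`,
`h l + h* s - ⟪l, s⟫`. It is real-valued, hence meaningful only where `h l` and `h* s` are
finite. -/
def fenchelGap (h : Y → EReal) (s l : Y) : ℝ :=
  (h l).toReal + (fenchel h s).toReal - ⟪l, s⟫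

lemma coe_fenchelGap (hs : fenchel h s ≠ ⊤) (hl : h l ≠ ⊤) :
    (fenchelGap h s l : EReal) = h l + fenchel h s - ((⟪l, s⟫ : ℝ) : EReal) := by
  rw [fenchelGap, EReal.coe_sub, EReal.coe_add,
    EReal.coe_toReal hl (ne_bot_of_fenchel_ne_top hs l),
    EReal.coe_toReal hs (fenchel_ne_bot hl)]

lemma fenchelGap_nonneg (hs : fenchel h s ≠ ⊤) (hl : h l ≠ ⊤) : 0 ≤ fenchelGap h s l := by
  have hle := fenchel_le_coe_iff.1 (EReal.le_coe_toReal hs) l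
  rw [← EReal.coe_toReal hl (ne_bot_of_fenchel_ne_top hs l), EReal.coe_le_coe_iff,
    real_inner_comm] at hle
  rw [fenchelGap]
  linarith

lemma fenchelGap_add_inner_le (hs : fenchel h s ≠ ⊤) (hv : v ∈ subdiff h l) (hw : h w ≠ ⊤) :
    fenchelGap h s l + ⟪v - s, w - l⟫ ≤ fenchelGap h s w := by
  have hle := hv w
  rw [← EReal.coe_toReal (ne_top_of_mem_subdiff hv hw) (ne_bot_of_fenchel_ne_top hs l),
    ← EReal.coe_toReal hw (ne_bot_of_fenchel_ne_top hs w), ← EReal.coe_add,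
    EReal.coe_le_coe_iff] at hle
  rw [fenchelGap, fenchelGap, inner_sub_left, inner_sub_right s, real_inner_comm s,
    real_inner_comm s]
  linarith

lemma fenchelGap_eq_zero_of_mem_subdiff (hbot : h l ≠ ⊥) (htop : h l ≠ ⊤)
    (hsl : s ∈ subdiff h l) : fenchelGap h s l = 0 := by
  have hle := fenchel_le_of_mem_subdiff hbot htop hsl
  have hs : fenchel h s ≠ ⊤ := ne_top_of_le_ne_top (EReal.coe_ne_top _) hle
  refine le_antisymm ?_ (fenchelGap_nonneg hs htop)
  rw [← EReal.coe_toReal hs (fenchel_ne_bot htop), EReal.coe_le_coe_iff, real_inner_comm] at hle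
  rw [fenchelGap]
  linarith

lemma exists_fenchelGap_lt (hs : fenchel h s ≠ ⊤) (htop : ∃ u, h u ≠ ⊤) {η : ℝ} (hη : 0 < η) :
    ∃ u, h u ≠ ⊤ ∧ fenchelGap h s u < η := by
  obtain ⟨u₀, hu₀⟩ := htop
  have hlt : (((fenchel h s).toReal - η : ℝ) : EReal) < fenchel h s := by
    conv_rhs => rw [← EReal.coe_toReal hs (fenchel_ne_bot hu₀)]
    exact EReal.coe_lt_coe_iff.2 (sub_lt_self _ hη)
  obtain ⟨u, hu⟩ := lt_iSup_iff.1 hlt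
  have hu_top : h u ≠ ⊤ := by
    intro hu_top
    simp [hu_top] at hu
  rw [← EReal.coe_toReal hu_top (ne_bot_of_fenchel_ne_top hs u), ← EReal.coe_sub,
    EReal.coe_lt_coe_iff, real_inner_comm] at hu
  refine ⟨u, hu_top, ?_⟩
  rw [fenchelGap]
  linarith

end Conjugate

section ProximalPoint

variable {E : Type*} [SeminormedAddCommGroup E] {γ : ℝ} {c p s u : Y}

/-- `p` is a proximal point of `h` at `c` with step `γ`, i.e. a minimizer of
`μ ↦ h μ + ‖c - μ‖ ^ 2 / (2 * γ)`. -/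
def IsProx (h : E → EReal) (γ : ℝ) (c p : E) : Prop :=
  ∀ μ : E, h p + ((‖c - p‖ ^ 2 / (2 * γ) : ℝ) : EReal)
    ≤ h μ + ((‖c - μ‖ ^ 2 / (2 * γ) : ℝ) : EReal)

lemma IsProx.ne_top {h : E → EReal} {c p u : E} (hp : IsProx h γ c p) (hu : h u ≠ ⊤) : h p ≠ ⊤ := by
  intro hp_top
  have hle := hp u
  rw [hp_top, EReal.top_add_coe, top_le_iff] at hle
  exact EReal.add_ne_top hu (EReal.coe_ne_top _) hle

lemma le_of_forall_le_add_mul {a b q : ℝ} (hle : ∀ t : ℝ, 0 < t → t ≤ 1 → a ≤ b + t * q) :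
    a ≤ b := by
  have hlim : Tendsto (fun t : ℝ => b + t * q) (nhdsWithin 0 (Set.Ioi 0)) (nhds b) := by
    refine Tendsto.mono_left (Continuous.tendsto' (by fun_prop) 0 b (by simp)) nhdsWithin_le_nhds
  refine ge_of_tendsto hlim ?_
  filter_upwards [Ioc_mem_nhdsGT (zero_lt_one' ℝ)] with t ht using hle t ht.1 ht.2

lemma IsProx.smul_sub_mem_subdiff (hp : IsProx h γ c p) (hcvx : JensenConvex h) (hγ : 0 < γ)
    (hbot : h p ≠ ⊥) (htop : h p ≠ ⊤) : γ⁻¹ • (c - p) ∈ subdiff h p := by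
  intro w
  refine EReal.le_of_forall_lt_iff_le.1 fun y hy => ?_
  have hx := EReal.coe_toReal htop hbot
  set x := (h p).toReal
  rw [← hx, ← EReal.coe_add, EReal.coe_le_coe_iff, real_inner_smul_left]
  refine le_of_forall_le_add_mul (q := ‖w - p‖ ^ 2 / (2 * γ)) fun t ht₀ ht₁ => ?_
  have hsegment := (hp (p + t • (w - p))).trans
    (add_le_add_left (hcvx.map_add_smul_sub_le hx.ge hy.le ht₀.le ht₁) _)
  rw [← hx, ← EReal.coe_add, ← EReal.coe_add, EReal.coe_le_coe_iff] at hsegment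
  have hexpand : ‖c - (p + t • (w - p))‖ ^ 2 / (2 * γ) = ‖c - p‖ ^ 2 / (2 * γ)
      - t * (γ⁻¹ * ⟪c - p, w - p⟫) + t * (t * (‖w - p‖ ^ 2 / (2 * γ))) := by
    rw [← sub_sub, norm_sub_sq_real, real_inner_smul_right, norm_smul, mul_pow,
      Real.norm_eq_abs, sq_abs]
    field_simp
  refine le_of_mul_le_mul_left ?_ ht₀
  linarith

lemma norm_sub_midpoint_sq (c x y : Y) :
    ‖c - (x + (1 / 2 : ℝ) • (y - x))‖ ^ 2
      = ‖c - x‖ ^ 2 / 2 + ‖c - y‖ ^ 2 / 2 - ‖x - y‖ ^ 2 / 4 := by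
  have hsum : c - (x + (1 / 2 : ℝ) • (y - x)) = (1 / 2 : ℝ) • ((c - x) + (c - y)) := by module
  have hdiff : x - y = -((c - x) - (c - y)) := by abel
  rw [hsum, hdiff, norm_neg, norm_smul, mul_pow, norm_add_sq_real (c - x),
    norm_sub_sq_real (c - x)]
  norm_num
  ring

lemma coe_le_add_norm_sub_sq_div {C : ℝ} (hC : fenchel h s ≤ C) (hγ : 0 < γ) (c μ : Y) :
    ((⟪s, c⟫ - γ * ‖s‖ ^ 2 / 2 - C : ℝ) : EReal)
      ≤ h μ + ((‖c - μ‖ ^ 2 / (2 * γ) : ℝ) : EReal) := by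
  refine le_trans ?_ (add_le_add_left (fenchel_le_coe_iff.1 hC μ) _)
  rw [← EReal.coe_add, EReal.coe_le_coe_iff]
  have hsq : ‖c - μ‖ ^ 2 / (2 * γ) - ⟪s, c - μ⟫ + γ * ‖s‖ ^ 2 / 2
      = ‖c - μ - γ • s‖ ^ 2 / (2 * γ) := by
    rw [norm_sub_sq_real (c - μ), real_inner_smul_right, norm_smul, mul_pow, Real.norm_eq_abs,
      sq_abs, real_inner_comm]
    field_simp
  have hnonneg : 0 ≤ ‖c - μ - γ • s‖ ^ 2 / (2 * γ) := by positivity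
  rw [inner_sub_right] at hsq
  linarith

lemma exists_isProx [CompleteSpace Y] (hlsc : LowerSemicontinuous h) (hcvx : JensenConvex h)
    (hu : h u ≠ ⊤) (hs : fenchel h s ≠ ⊤) (hγ : 0 < γ) (c : Y) : ∃ p, IsProx h γ c p := by
  let q : Y → ℝ := fun μ => ‖c - μ‖ ^ 2 / (2 * γ)
  let f : Y → EReal := fun μ => h μ + q μ
  have hf_lsc : LowerSemicontinuous f := by
    refine hlsc.add' (Continuous.lowerSemicontinuous ?_) fun μ =>
      EReal.continuousAt_add (by simp) (by simp)
    exact continuous_coe_real_ereal.comp (by fun_prop)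
  obtain ⟨C, hC⟩ := exists_fenchel_le_coe hs
  have hm : ⨅ μ, f μ = ((⨅ μ, f μ).toReal : EReal) :=
    (EReal.coe_toReal
      (ne_top_of_le_ne_top (EReal.add_ne_top hu (EReal.coe_ne_top _)) (iInf_le f u))
      (ne_bot_of_le_ne_bot (EReal.coe_ne_bot _)
        (le_iInf (coe_le_add_norm_sub_sq_div hC hγ c)))).symm
  set m := (⨅ μ, f μ).toReal
  obtain ⟨p, hp⟩ := exists_eq_iInf_of_dist_sq_le hf_lsc hm (C := 8 * γ) fun x y δ hx hy => by
    have hmid := hcvx.map_add_smul_sub_le (ereal_add_coe_le_coe_iff.1 hx)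
      (ereal_add_coe_le_coe_iff.1 hy) (t := 1 / 2) (by norm_num) (by norm_num)
    have hle : (m : EReal) ≤ _ :=
      (hm ▸ iInf_le f (x + (1 / 2 : ℝ) • (y - x))).trans (add_le_add_left hmid _)
    rw [← EReal.coe_add, EReal.coe_le_coe_iff] at hle
    have hq : q (x + (1 / 2 : ℝ) • (y - x)) = q x / 2 + q y / 2 - ‖x - y‖ ^ 2 / (8 * γ) := by
      simp only [q, norm_sub_midpoint_sq]
      field_simp
      ring
    rw [dist_eq_norm, mul_comm, ← div_le_iff₀ (by positivity)]
    linarith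
  exact ⟨p, fun μ => (hp.trans hm.symm).le.trans (iInf_le f μ)⟩

end ProximalPoint

section SubdifferentialRange

variable {s v : Y}

/-- The range of the subdifferential of `h`. -/
def rangeSubdiff (h : Y → EReal) : Set Y := {v | ∃ u, v ∈ subdiff h u}

lemma exists_mem_rangeSubdiff_norm_sub_sq_le [CompleteSpace Y] (hlsc : LowerSemicontinuous h)
    (hcvx : JensenConvex h) {u : Y} (hu : h u ≠ ⊤) (hs : fenchel h s ≠ ⊤) {γ : ℝ} (hγ : 0 < γ) :
    ∃ v ∈ rangeSubdiff h, ‖s - v‖ ^ 2 ≤ 2 * fenchelGap h s u / γ := by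
  -- Up to a constant, the objective of this step is `fenchelGap h s μ + ‖u - μ‖ ^ 2 / (2 * γ)`.
  obtain ⟨p, hp⟩ := exists_isProx hlsc hcvx hu hs hγ (u + γ • s)
  have hp_top : h p ≠ ⊤ := hp.ne_top hu
  have hbot := ne_bot_of_fenchel_ne_top hs
  refine ⟨_, ⟨p, hp.smul_sub_mem_subdiff hcvx hγ (hbot p) hp_top⟩, ?_⟩
  have hle := hp u
  rw [← EReal.coe_toReal hp_top (hbot p), ← EReal.coe_toReal hu (hbot u), ← EReal.coe_add,
    ← EReal.coe_add, EReal.coe_le_coe_iff] at hle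
  have hgap_p := fenchelGap_nonneg hs hp_top
  have hnorm_u : ‖u + γ • s - u‖ ^ 2 / (2 * γ) = γ * ‖s‖ ^ 2 / 2 := by
    rw [add_sub_cancel_left, norm_smul, mul_pow, Real.norm_eq_abs, sq_abs]
    field_simp
  have hnorm_p : ‖u + γ • s - p‖ ^ 2 / (2 * γ)
      = γ * ‖s‖ ^ 2 / 2 + ⟪u, s⟫ - ⟪p, s⟫ + ‖u - p‖ ^ 2 / (2 * γ) := by
    rw [show u + γ • s - p = γ • s + (u - p) by abel, norm_add_sq_real, real_inner_smul_left,
      norm_smul, mul_pow, Real.norm_eq_abs, sq_abs, real_inner_comm, inner_sub_left]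
    field_simp
    ring
  have hdist : ‖u - p‖ ^ 2 / (2 * γ) ≤ fenchelGap h s u := by
    simp only [fenchelGap] at hgap_p ⊢
    linarith
  calc ‖s - γ⁻¹ • (u + γ • s - p)‖ ^ 2 = ‖γ⁻¹ • (u - p)‖ ^ 2 := by
        rw [add_sub_right_comm, smul_add, inv_smul_smul₀ hγ.ne', sub_add_cancel_right, norm_neg]
    _ = 2 * (‖u - p‖ ^ 2 / (2 * γ)) / γ := by
        rw [norm_smul, mul_pow, Real.norm_eq_abs, sq_abs]
        field_simp
    _ ≤ 2 * fenchelGap h s u / γ := by gcongr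

lemma setOf_fenchel_ne_top_subset_closure_rangeSubdiff [CompleteSpace Y]
    (hlsc : LowerSemicontinuous h) (hcvx : JensenConvex h) (htop : ∃ u, h u ≠ ⊤) :
    {s | fenchel h s ≠ ⊤} ⊆ closure (rangeSubdiff h) := by
  intro s hs
  obtain ⟨u, hu⟩ := htop
  refine Metric.mem_closure_iff.2 fun e he => ?_
  have hlim : Tendsto (fun γ : ℝ => 2 * fenchelGap h s u / γ) atTop (nhds 0) :=
    tendsto_const_nhds.div_atTop tendsto_id
  obtain ⟨γ, hγ_lt, hγ⟩ :=
    ((hlim.eventually_lt_const (sq_pos_of_pos he)).and (eventually_gt_atTop 0)).exists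
  obtain ⟨v, hv, hle⟩ := exists_mem_rangeSubdiff_norm_sub_sq_le hlsc hcvx hu hs hγ
  exact ⟨v, hv, (dist_eq_norm s v).trans_lt (lt_of_pow_lt_pow_left₀ 2 he.le (hle.trans_lt hγ_lt))⟩

lemma closure_rangeSubdiff_eq [CompleteSpace Y] (hbot : ∀ u, h u ≠ ⊥) (htop : ∃ u, h u ≠ ⊤)
    (hlsc : LowerSemicontinuous h) (hcvx : JensenConvex h) :
    closure (rangeSubdiff h) = closure {s | fenchel h s ≠ ⊤} := by
  refine subset_antisymm (closure_mono ?_) (closure_minimal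
    (setOf_fenchel_ne_top_subset_closure_rangeSubdiff hlsc hcvx htop) isClosed_closure)
  rintro v ⟨u, hv⟩
  obtain ⟨w, hw⟩ := htop
  exact ne_top_of_le_ne_top (EReal.coe_ne_top _)
    (fenchel_le_of_mem_subdiff (hbot u) (ne_top_of_mem_subdiff hv hw) hv)

lemma real_inner_sub_self_nonneg_of_norm_minimal {K : Set Y} (hK : Convex ℝ K) (hs : s ∈ K)
    (hmin : ∀ v ∈ K, ‖s‖ ≤ ‖v‖) (hv : v ∈ K) : 0 ≤ ⟪v - s, s⟫ := by
  have : Nonempty K := ⟨⟨s, hs⟩⟩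
  have hiInf : ‖0 - s‖ = ⨅ w : K, ‖0 - (w : Y)‖ := by
    simp only [zero_sub, norm_neg]
    exact le_antisymm (le_ciInf fun w => hmin w w.2)
      (ciInf_le (f := fun w : K => ‖(w : Y)‖) ⟨‖s‖, by rintro _ ⟨w, rfl⟩; exact hmin w w.2⟩ ⟨s, hs⟩)
  have hle := (norm_eq_iInf_iff_real_inner_le_zero hK hs).1 hiInf v hv
  rwa [zero_sub, inner_neg_left, neg_nonpos, real_inner_comm] at hle

lemma real_inner_sub_self_nonneg_of_mem_rangeSubdiff [CompleteSpace Y] (hbot : ∀ u, h u ≠ ⊥)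
    (htop : ∃ u, h u ≠ ⊤) (hlsc : LowerSemicontinuous h) (hcvx : JensenConvex h)
    (hs : s ∈ closure (rangeSubdiff h)) (hmin : ∀ v ∈ closure (rangeSubdiff h), ‖s‖ ≤ ‖v‖)
    (hv : v ∈ rangeSubdiff h) : 0 ≤ ⟪v - s, s⟫ := by
  have hconvex : Convex ℝ (closure (rangeSubdiff h)) := by
    rw [closure_rangeSubdiff_eq hbot htop hlsc hcvx]
    exact (convex_setOf_fenchel_ne_top h).closure
  exact real_inner_sub_self_nonneg_of_norm_minimal hconvex hs hmin (subset_closure hv)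

end SubdifferentialRange

section SubgradientStep

variable {γ : ℝ} {p s u v w : Y}

lemma fenchelGap_le_add_of_mem_subdiff (hs : fenchel h s ≠ ⊤) (hγ : 0 < γ)
    (hv : v ∈ subdiff h p) (hvs : 0 ≤ ⟪v - s, s⟫) (hw : h w ≠ ⊤) :
    fenchelGap h s p ≤ fenchelGap h s w + ‖p + γ • v - w‖ ^ 2 / (4 * γ) := by
  have hgap := fenchelGap_add_inner_le hs hv hw
  have hsq : ⟪v - s, w - p⟫ + ‖p + γ • v - w‖ ^ 2 / (4 * γ)
      = γ * ⟪v - s, s⟫ + ‖(2 * γ) • (v - s) - (p + γ • v - w)‖ ^ 2 / (4 * γ) := by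
    have hsplit : w - p = γ • (v - s) + γ • s - (p + γ • v - w) := by module
    rw [hsplit, inner_sub_right, inner_add_right, real_inner_smul_right, real_inner_smul_right,
      real_inner_self_eq_norm_sq, norm_sub_sq_real _ (p + γ • v - w), real_inner_smul_left,
      norm_smul, mul_pow, Real.norm_eq_abs, sq_abs]
    field_simp
    ring
  have hnonneg : 0 ≤ ‖(2 * γ) • (v - s) - (p + γ • v - w)‖ ^ 2 / (4 * γ) := by positivity
  linarith [mul_nonneg hγ.le hvs]

lemma norm_sq_add_fenchelGap_le_of_mem_subdiff (hs : fenchel h s ≠ ⊤) (hγ : 0 < γ)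
    (hv : v ∈ subdiff h p) (hvs : 0 ≤ ⟪v - s, s⟫) (hu : h u ≠ ⊤) {t : ℝ} (ht : 0 ≤ t) :
    ‖p + (t + γ) • s - u‖ ^ 2 + 2 * γ * fenchelGap h s p
      ≤ ‖p + γ • v + t • s - u‖ ^ 2 + 2 * γ * fenchelGap h s u := by
  have hgap := fenchelGap_add_inner_le hs hv hu
  have hinner : fenchelGap h s p - fenchelGap h s u ≤ ⟪p + (t + γ) • s - u, v - s⟫ := by
    have hsplit : p + (t + γ) • s - u = (t + γ) • s - (u - p) := by module
    rw [hsplit, inner_sub_left, real_inner_smul_left, real_inner_comm, real_inner_comm _ (u - p)]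
    linarith [mul_nonneg (add_nonneg ht hγ.le) hvs]
  have hsplit : p + γ • v + t • s - u = (p + (t + γ) • s - u) + γ • (v - s) := by module
  rw [hsplit, norm_add_sq_real, real_inner_smul_right]
  linarith [mul_le_mul_of_nonneg_left hinner hγ.le, sq_nonneg ‖γ • (v - s)‖]

end SubgradientStep

section RealSequences

variable {γ F δ : ℕ → ℝ}

lemma sum_range_mul_le_of_le_add (hγ : ∀ k, 0 ≤ γ k) (hF : ∀ k, F (k + 1) ≤ F k + δ k) (n : ℕ) :
    (∑ i ∈ Finset.range (n + 1), γ i) * F n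
      ≤ ∑ k ∈ Finset.range (n + 1), γ k * F k
        + ∑ k ∈ Finset.range n, δ k * ∑ i ∈ Finset.range (k + 1), γ i := by
  induction n with
  | zero => simp
  | succ n ih =>
    rw [Finset.sum_range_succ γ (n + 1), Finset.sum_range_succ (fun k => γ k * F k) (n + 1),
      Finset.sum_range_succ (fun k => δ k * _) n]
    have hmono := mul_le_mul_of_nonneg_left (hF n)
      (Finset.sum_nonneg fun i (_ : i ∈ Finset.range (n + 1)) => hγ i)
    linarith

lemma summable_add_sq (hδ : Summable δ) : Summable fun k => δ k + δ k ^ 2 :=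
  hδ.add ((hδ.norm.mul_tendsto_const hδ.tendsto_cofinite_zero).congr fun _ => (sq _).symm)

lemma sum_range_le_mul_exp {D f b c : ℕ → ℝ} (hD : ∀ n, 0 ≤ D n) (hf : ∀ n, 0 ≤ f n)
    (hb : ∀ n, 0 ≤ b n) (hc : ∀ n, 0 ≤ c n)
    (hstep : ∀ n, D (n + 1) + f n ≤ (1 + c n) * D n + b n) (n : ℕ) :
    ∑ k ∈ Finset.range n, f k
      ≤ (D 0 + ∑ k ∈ Finset.range n, b k) * Real.exp (∑ k ∈ Finset.range n, c k) := by
  have hsum (m : ℕ) : 0 ≤ ∑ k ∈ Finset.range m, f k := Finset.sum_nonneg fun k _ => hf k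
  have hgronwall := discrete_gronwall (u := fun m => D m + ∑ k ∈ Finset.range m, f k) (n₀ := 0)
    (add_nonneg (hD 0) (hsum 0))
    (fun m _ => by
      rw [Finset.sum_range_succ]
      linarith [hstep m, mul_nonneg (hc m) (hsum m)])
    (fun m _ => hc m) (fun m _ => hb m) n.zero_le
  rw [Finset.sum_range_zero, add_zero, ← Finset.range_eq_Ico] at hgronwall
  exact (le_add_of_nonneg_left (hD n)).trans hgronwall

lemma tendsto_zero_of_mul_le_add_mul {G : ℕ → ℝ} (hG : Tendsto G atTop atTop)
    (hF : ∀ n, 0 ≤ F n) (hle : ∀ η > 0, ∃ K, ∀ n, G n * F n ≤ K + η * G n) :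
    Tendsto F atTop (nhds 0) := by
  refine tendsto_order.2 ⟨fun a ha => .of_forall fun n => ha.trans_le (hF n), fun a ha => ?_⟩
  obtain ⟨K, hK⟩ := hle (a / 2) (half_pos ha)
  filter_upwards [hG.eventually_gt_atTop 0, hG.eventually_gt_atTop (K / (a / 2))] with n hpos hn
  rw [div_lt_iff₀ (half_pos ha)] at hn
  refine lt_of_mul_lt_mul_left ?_ hpos.le
  linarith [hK n]

lemma exists_eventually_le_div_sqrt {a : ℕ → EReal} {G : ℕ → ℝ} (hG : Tendsto G atTop atTop)
    {M : ℝ} (hM : ∀ k, a (k + 1) ≤ ((M / G (k + 1) : ℝ) : EReal)) :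
    ∃ M' : ℝ, ∀ᶠ k in atTop, a k ≤ ((M' / √(G k) : ℝ) : EReal) := by
  refine ⟨|M|, ?_⟩
  filter_upwards [hG.eventually_ge_atTop 1, eventually_ge_atTop 1] with n hGn hn
  obtain ⟨k, rfl⟩ := Nat.exists_eq_add_of_le' hn
  refine (hM k).trans (EReal.coe_le_coe_iff.2 ?_)
  have : 0 < √(G (k + 1)) := Real.sqrt_pos.2 (by linarith)
  gcongr
  · exact le_abs_self M
  · exact Real.sqrt_le_iff.2 ⟨by linarith, by nlinarith⟩

end RealSequences

/-- A run of the inexact proximal point algorithm in subgradient form. In the notation of the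
algorithm, `p k` and `v k` are `λ⋆^{k+1}` and `s⋆^{k+1}`, and `ε k` is `ε_{k+1}`. -/
structure InexactProximalRun (h : Y → EReal) (γ ε : ℕ → ℝ) (lam p v : ℕ → Y) : Prop where
  step_pos : ∀ k, 0 < γ k
  mem_subdiff : ∀ k, v k ∈ subdiff h (p k)
  eq_add_smul : ∀ k, lam k = p k + γ k • v k
  norm_sub_le : ∀ k, ‖lam (k + 1) - p k‖ ≤ ε k

namespace InexactProximalRun

variable {γ ε : ℕ → ℝ} {lam p v : ℕ → Y} {s u : Y}

lemma of_isProx (hbot : ∀ u, h u ≠ ⊥) (htop : ∃ u, h u ≠ ⊤) (hcvx : JensenConvex h)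
    (hγ : ∀ k, 0 < γ k) (hprox : ∀ k, IsProx h (γ k) (lam k) (p k))
    (herr : ∀ k, ‖lam (k + 1) - p k‖ ≤ ε k) :
    InexactProximalRun h γ ε lam p fun k => (γ k)⁻¹ • (lam k - p k) where
  step_pos := hγ
  mem_subdiff k :=
    (hprox k).smul_sub_mem_subdiff hcvx (hγ k) (hbot _) ((hprox k).ne_top htop.choose_spec)
  eq_add_smul k := by rw [smul_inv_smul₀ (hγ k).ne', add_sub_cancel]
  norm_sub_le := herr

lemma error_nonneg (run : InexactProximalRun h γ ε lam p v) (k : ℕ) : 0 ≤ ε k :=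
  (norm_nonneg _).trans (run.norm_sub_le k)

lemma sum_step_nonneg (run : InexactProximalRun h γ ε lam p v) (n : ℕ) :
    0 ≤ ∑ i ∈ Finset.range n, γ i :=
  Finset.sum_nonneg fun i _ => (run.step_pos i).le

lemma ne_top (run : InexactProximalRun h γ ε lam p v) (hu : h u ≠ ⊤) (k : ℕ) : h (p k) ≠ ⊤ :=
  ne_top_of_mem_subdiff (run.mem_subdiff k) hu

lemma fenchelGap_succ_le (run : InexactProximalRun h γ ε lam p v) (hs : fenchel h s ≠ ⊤)
    (hvs : ∀ k, 0 ≤ ⟪v k - s, s⟫) (hu : h u ≠ ⊤) (k : ℕ) :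
    fenchelGap h s (p (k + 1)) ≤ fenchelGap h s (p k) + ε k ^ 2 / (4 * γ (k + 1)) := by
  have hγ := run.step_pos (k + 1)
  refine (fenchelGap_le_add_of_mem_subdiff hs hγ (run.mem_subdiff _) (hvs _)
    (run.ne_top hu k)).trans ?_
  rw [← run.eq_add_smul]
  gcongr
  exact run.norm_sub_le k

lemma norm_sq_add_fenchelGap_le (run : InexactProximalRun h γ ε lam p v)
    (hs : fenchel h s ≠ ⊤) (hvs : ∀ k, 0 ≤ ⟪v k - s, s⟫) (hu : h u ≠ ⊤) (k : ℕ) :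
    ‖lam (k + 1) + (∑ i ∈ Finset.range (k + 1), γ i) • s - u‖ ^ 2
        + 2 * (γ k * fenchelGap h s (p k))
      ≤ (1 + ε k) * ‖lam k + (∑ i ∈ Finset.range k, γ i) • s - u‖ ^ 2
        + (ε k + ε k ^ 2 + 2 * fenchelGap h s u * ((1 + ε k) * γ k)) := by
  have henergy := norm_sq_add_fenchelGap_le_of_mem_subdiff hs (run.step_pos k)
    (run.mem_subdiff k) (hvs k) hu (run.sum_step_nonneg k)
  rw [← run.eq_add_smul, ← Finset.sum_range_succ] at henergy
  set t := ∑ i ∈ Finset.range (k + 1), γ i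
  set r := ‖p k + t • s - u‖
  have htriangle : ‖lam (k + 1) + t • s - u‖ ≤ r + ε k := by
    rw [show lam (k + 1) + t • s - u = (p k + t • s - u) + (lam (k + 1) - p k) by abel]
    exact (norm_add_le _ _).trans (add_le_add_right (run.norm_sub_le k) _)
  have hsq : ‖lam (k + 1) + t • s - u‖ ^ 2 ≤ (r + ε k) ^ 2 := by gcongr
  have hamgm : 2 * r * ε k ≤ (1 + r ^ 2) * ε k :=
    mul_le_mul_of_nonneg_right (by linarith [sq_nonneg (r - 1)]) (run.error_nonneg k)
  have hgap : 0 ≤ 2 * γ k * fenchelGap h s (p k) :=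
    mul_nonneg (mul_nonneg zero_le_two (run.step_pos k).le)
      (fenchelGap_nonneg hs (run.ne_top hu k))
  linarith [mul_le_mul_of_nonneg_left henergy (run.error_nonneg k),
    mul_nonneg (run.error_nonneg k) hgap]

lemma two_mul_sum_fenchelGap_le (run : InexactProximalRun h γ ε lam p v)
    (hs : fenchel h s ≠ ⊤) (hvs : ∀ k, 0 ≤ ⟪v k - s, s⟫) (hu : h u ≠ ⊤) (hε : Summable ε)
    (n : ℕ) :
    2 * ∑ k ∈ Finset.range n, γ k * fenchelGap h s (p k)
      ≤ (‖lam 0 - u‖ ^ 2 + ∑' k, (ε k + ε k ^ 2)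
        + 2 * fenchelGap h s u * ((1 + ∑' k, ε k) * ∑ k ∈ Finset.range n, γ k))
          * Real.exp (∑' k, ε k) := by
  have hε₀ := run.error_nonneg
  have hγ₀ (k : ℕ) : 0 ≤ γ k := (run.step_pos k).le
  have hη := fenchelGap_nonneg hs hu
  have hgronwall := sum_range_le_mul_exp
    (D := fun k => ‖lam k + (∑ i ∈ Finset.range k, γ i) • s - u‖ ^ 2)
    (f := fun k => 2 * (γ k * fenchelGap h s (p k)))
    (b := fun k => ε k + ε k ^ 2 + 2 * fenchelGap h s u * ((1 + ε k) * γ k))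
    (fun k => sq_nonneg _)
    (fun k => mul_nonneg zero_le_two (mul_nonneg (hγ₀ k) (fenchelGap_nonneg hs (run.ne_top hu k))))
    (fun k => by have := hε₀ k; have := hγ₀ k; positivity) hε₀
    (run.norm_sq_add_fenchelGap_le hs hvs hu) n
  rw [← Finset.mul_sum, Finset.sum_range_zero, zero_smul, add_zero, Finset.sum_add_distrib,
    ← Finset.mul_sum, ← add_assoc] at hgronwall
  refine hgronwall.trans ?_
  have hadd (k : ℕ) : 0 ≤ ε k + ε k ^ 2 := add_nonneg (hε₀ k) (sq_nonneg _)
  have hsum : ∑ k ∈ Finset.range n, (ε k + ε k ^ 2) ≤ ∑' k, (ε k + ε k ^ 2) :=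
    (summable_add_sq hε).sum_le_tsum _ fun k _ => hadd k
  have hweighted : ∑ k ∈ Finset.range n, (1 + ε k) * γ k
      ≤ (1 + ∑' k, ε k) * ∑ k ∈ Finset.range n, γ k := by
    rw [Finset.mul_sum]
    refine Finset.sum_le_sum fun k _ => mul_le_mul_of_nonneg_right ?_ (hγ₀ k)
    exact add_le_add_right (hε.le_tsum k fun i _ => hε₀ i) 1
  have hexp : ∑ k ∈ Finset.range n, ε k ≤ ∑' k, ε k := hε.sum_le_tsum _ fun k _ => hε₀ k
  have hsum_step := run.sum_step_nonneg n
  have herror_nonneg : 0 ≤ ∑' k, ε k := tsum_nonneg hε₀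
  have hsum_nonneg : 0 ≤ ∑' k, (ε k + ε k ^ 2) := tsum_nonneg hadd
  gcongr

lemma exists_mul_fenchelGap_le (run : InexactProximalRun h γ ε lam p v)
    (hs : fenchel h s ≠ ⊤) (hvs : ∀ k, 0 ≤ ⟪v k - s, s⟫) (hu : h u ≠ ⊤) (hε : Summable ε)
    (hεγ : Summable fun k => ε k ^ 2 / γ (k + 1) * ∑ i ∈ Finset.range (k + 1), γ i) :
    ∃ K, ∀ n, (∑ i ∈ Finset.range (n + 1), γ i) * fenchelGap h s (p n)
      ≤ K + fenchelGap h s u * ((1 + ∑' k, ε k) * Real.exp (∑' k, ε k))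
        * ∑ i ∈ Finset.range (n + 1), γ i := by
  refine ⟨(‖lam 0 - u‖ ^ 2 + ∑' k, (ε k + ε k ^ 2)) * Real.exp (∑' k, ε k) / 2
    + (∑' k, ε k ^ 2 / γ (k + 1) * ∑ i ∈ Finset.range (k + 1), γ i) / 4, fun n => ?_⟩
  have hmono := sum_range_mul_le_of_le_add (F := fun k => fenchelGap h s (p k))
    (δ := fun k => ε k ^ 2 / (4 * γ (k + 1))) (fun k => (run.step_pos k).le)
    (run.fenchelGap_succ_le hs hvs hu) n
  have hsum := run.two_mul_sum_fenchelGap_le hs hvs hu hε (n + 1)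
  have herror : ∑ k ∈ Finset.range n,
      ε k ^ 2 / (4 * γ (k + 1)) * ∑ i ∈ Finset.range (k + 1), γ i
        ≤ (∑' k, ε k ^ 2 / γ (k + 1) * ∑ i ∈ Finset.range (k + 1), γ i) / 4 := by
    rw [← tsum_div_const]
    refine le_of_eq_of_le (Finset.sum_congr rfl fun k _ => ?_)
      ((hεγ.div_const 4).sum_le_tsum _ fun k _ => ?_)
    · rw [mul_comm 4, ← div_div, div_mul_eq_mul_div]
    · have := run.step_pos (k + 1)
      have := run.sum_step_nonneg (k + 1)
      positivity
  linarith

lemma tendsto_fenchelGap (run : InexactProximalRun h γ ε lam p v)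
    (hs : fenchel h s ≠ ⊤) (hvs : ∀ k, 0 ≤ ⟪v k - s, s⟫) (htop : ∃ u, h u ≠ ⊤)
    (hε : Summable ε)
    (hεγ : Summable fun k => ε k ^ 2 / γ (k + 1) * ∑ i ∈ Finset.range (k + 1), γ i)
    (hG : Tendsto (fun n => ∑ i ∈ Finset.range n, γ i) atTop atTop) :
    Tendsto (fun k => fenchelGap h s (p k)) atTop (nhds 0) := by
  obtain ⟨w, hw⟩ := htop
  refine tendsto_zero_of_mul_le_add_mul (hG.comp (tendsto_add_atTop_nat 1))
    (fun k => fenchelGap_nonneg hs (run.ne_top hw k)) fun η hη => ?_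
  have hpos : 0 < (1 + ∑' k, ε k) * Real.exp (∑' k, ε k) := by
    have : 0 ≤ ∑' k, ε k := tsum_nonneg run.error_nonneg
    positivity
  obtain ⟨u, hu, hlt⟩ := exists_fenchelGap_lt hs ⟨w, hw⟩ (div_pos hη hpos)
  obtain ⟨K, hK⟩ := run.exists_mul_fenchelGap_le hs hvs hu hε hεγ
  refine ⟨K, fun n => (hK n).trans (add_le_add_right ?_ K)⟩
  exact mul_le_mul_of_nonneg_right ((lt_div_iff₀ hpos).1 hlt).le (run.sum_step_nonneg (n + 1))

lemma exists_fenchelGap_le_div (run : InexactProximalRun h γ ε lam p v)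
    (hs : fenchel h s ≠ ⊤) (hvs : ∀ k, 0 ≤ ⟪v k - s, s⟫) (hu : h u ≠ ⊤)
    (hsu : s ∈ subdiff h u) (hε : Summable ε)
    (hεγ : Summable fun k => ε k ^ 2 / γ (k + 1) * ∑ i ∈ Finset.range (k + 1), γ i) :
    ∃ M, ∀ k, fenchelGap h s (p k) ≤ M / ∑ i ∈ Finset.range (k + 1), γ i := by
  obtain ⟨K, hK⟩ := run.exists_mul_fenchelGap_le hs hvs hu hε hεγ
  rw [fenchelGap_eq_zero_of_mem_subdiff (ne_bot_of_fenchel_ne_top hs u) hu hsu] at hK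
  refine ⟨K, fun k => (le_div_iff₀' (Finset.sum_pos (fun i _ => run.step_pos i) (by simp))).2 ?_⟩
  simpa only [zero_mul, add_zero] using hK k

end InexactProximalRun

theorem statement8_general [CompleteSpace Y] {s : Y} {γ ε : ℕ → ℝ} {lam p : ℕ → Y}
    (hbot : ∀ u, h u ≠ ⊥) (htop : ∃ u, h u ≠ ⊤) (hlsc : LowerSemicontinuous h)
    (hcvx : JensenConvex h) (hγ : ∀ k, 0 < γ k)
    (hprox : ∀ k, IsProx h (γ k) (lam k) (p k)) (herr : ∀ k, ‖lam (k + 1) - p k‖ ≤ ε k)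
    (hε : Summable ε)
    (hεγ : Summable fun k => ε k ^ 2 / γ (k + 1) * ∑ i ∈ Finset.range (k + 1), γ i)
    (hs : s ∈ closure (rangeSubdiff h)) (hmin : ∀ v ∈ closure (rangeSubdiff h), ‖s‖ ≤ ‖v‖) :
    (Tendsto (fun n => ∑ i ∈ Finset.range n, γ i) atTop atTop → fenchel h s ≠ ⊤ →
      Tendsto (fun k => h (p k) + fenchel h s - ((⟪p k, s⟫ : ℝ) : EReal)) atTop (nhds 0)) ∧
    (s ∈ rangeSubdiff h → ∃ M : ℝ, ∀ k, h (p k) + fenchel h s - ((⟪p k, s⟫ : ℝ) : EReal)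
      ≤ ((M / ∑ i ∈ Finset.range (k + 1), γ i : ℝ) : EReal)) := by
  have run := InexactProximalRun.of_isProx hbot htop hcvx hγ hprox herr
  have hp (k : ℕ) : h (p k) ≠ ⊤ := run.ne_top htop.choose_spec k
  have hvs (k : ℕ) := real_inner_sub_self_nonneg_of_mem_rangeSubdiff hbot htop hlsc hcvx hs hmin
    ⟨p k, run.mem_subdiff k⟩
  constructor
  · intro hG hs_top
    simp only [← coe_fenchelGap hs_top (hp _)]
    exact (continuous_coe_real_ereal.tendsto 0).comp
      (run.tendsto_fenchelGap hs_top hvs htop hε hεγ hG)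
  · rintro ⟨u, hsu⟩
    have hu : h u ≠ ⊤ := ne_top_of_mem_subdiff hsu htop.choose_spec
    have hs_top : fenchel h s ≠ ⊤ :=
      ne_top_of_le_ne_top (EReal.coe_ne_top _) (fenchel_le_of_mem_subdiff (hbot u) hu hsu)
    simp only [← coe_fenchelGap hs_top (hp _), EReal.coe_le_coe_iff]
    exact run.exists_fenchelGap_le_div hs_top hvs hu hsu hε hεγ

end HilbertSpace

theorem statement8
    {Y : Type*}
    [NormedAddCommGroup Y] [InnerProductSpace ℝ Y] [CompleteSpace Y]
    (h : Y → EReal)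
    (hh_bot : ∀ u : Y, h u ≠ ⊥) (hh_top : ∃ u : Y, h u ≠ ⊤)
    (hh_lsc : LowerSemicontinuous h)
    (hh_cvx : ∀ u v : Y, ∀ a b : ℝ, 0 ≤ a → 0 ≤ b → a + b = 1 →
      h (a • u + b • v) ≤ (a : EReal) * h u + (b : EReal) * h v)
    (γ : ℕ → ℝ) (hγ : ∀ k : ℕ, 0 < γ k) (ε : ℕ → ℝ) (hε : ∀ k : ℕ, 0 ≤ ε k)
    (lam lamstar sstar ss : ℕ → Y)
    (hmin : ∀ (k : ℕ) (μ : Y),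
      h (lamstar (k+1)) + ((‖lam k - lamstar (k+1)‖ ^ 2 / (2 * γ k) : ℝ) : EReal)
        ≤ h μ + ((‖lam k - μ‖ ^ 2 / (2 * γ k) : ℝ) : EReal))
    (hsstar : ∀ k : ℕ, sstar (k+1) = (γ k)⁻¹ • (lam k - lamstar (k+1)))
    (herr : ∀ k : ℕ, ‖lam (k+1) - lamstar (k+1)‖ ≤ ε (k+1))
    (hss : ∀ k : ℕ, ss (k+1) = (γ k)⁻¹ • (lam k - lam (k+1)))
    (A1 : Summable ε)
    (A2 : (fun k : ℕ => ε (k+1) / γ k * ∑ i ∈ Finset.range (k+1), γ i)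
        =O[atTop] fun k : ℕ => 1 / Real.sqrt (∑ i ∈ Finset.range (k+1), γ i))
    (A3 : Summable fun k : ℕ => (ε (k+1) / γ (k+1)) ^ 2 * ∑ i ∈ Finset.range (k+1), γ i)
    (A4 : Summable fun k : ℕ => ε (k+1) / γ (k+1) * ∑ i ∈ Finset.range (k+1), γ i)
    (A5 : Tendsto (fun n : ℕ => ∑ i ∈ Finset.range n, γ i) atTop atTop)
    (sbar : Y)
    (hsbar_mem : sbar ∈ closure {v : Y | ∃ u : Y, v ∈ subdiff h u})
    (hsbar_min : ∀ v ∈ closure {v : Y | ∃ u : Y, v ∈ subdiff h u}, ‖sbar‖ ≤ ‖v‖)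
    :
    (fenchel h sbar < ⊤ →
      Tendsto
        (fun k : ℕ => h (lamstar k) + fenchel h sbar - ((⟪lamstar k, sbar⟫ : ℝ) : EReal))
        atTop (nhds 0)) ∧
    ((∃ lb : Y, sbar ∈ subdiff h lb) →
      ∃ M : ℝ, ∀ᶠ k in atTop,
        h (lamstar k) + fenchel h sbar - ((⟪lamstar k, sbar⟫ : ℝ) : EReal)
          ≤ ((M / Real.sqrt (∑ i ∈ Finset.range k, γ i) : ℝ) : EReal)) := by
  have hA1 : Summable fun k => ε (k + 1) := (summable_nat_add_iff 1).2 A1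
  have hεγ : Summable fun k => ε (k + 1) ^ 2 / γ (k + 1) * ∑ i ∈ Finset.range (k + 1), γ i :=
    (A4.norm.mul_tendsto_const hA1.tendsto_cofinite_zero).congr fun k => by ring
  obtain ⟨hlim, hrate⟩ := statement8_general (p := fun k => lamstar (k + 1)) hh_bot hh_top hh_lsc
    hh_cvx hγ hmin herr hA1 hεγ hsbar_mem hsbar_min
  refine ⟨fun hs => (tendsto_add_atTop_iff_nat 1).1 (hlim A5 hs.ne), fun hs => ?_⟩
  obtain ⟨M, hM⟩ := hrate hs
  exact exists_eventually_le_div_sqrt A5 hM
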